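/- arXiv:1804.10164 — 5 statements merged into one kernel-verified Lean document; each statement's English description precedes it below -/
import Mathlib

section
/- Let O be a commutative ring, K its total ring of fractions, and I an O-submodule of K containing an element g that is a unit of K. Then the map Φ : Hom_O(I, O) → K defined by Φ(φ) = φ(g)·g^{-1} (which does not depend on the choice of the unit g ∈ I) is an injective O-module homomorphism whose image is exactly I* = {x ∈ K : x·h lies in the canonical image of O for every h ∈ I}. Consequently Φ induces an O-module isomorphism Hom_O(I, O) ≅ I*. -/
/-!
The proof rests on the identity `φ(h) * g = φ(g) * h` in `K`, valid for every `O`-linear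
`φ : I → O` and all `g, h ∈ I`: clear denominators and use linearity of `φ` (`map_mul_swap`).
When `g` is a unit it says `φ(h) = Φ(φ) * h`, so `φ` is multiplication by `Φ(φ)`. Hence `Φ` is
injective with values in `I*`, and conversely an `x ∈ I*` is the image of `h ↦ x * h`.
-/

/-- With `g = a / s` and `h = b / t`, the elements `(a * t) • h` and `(b * s) • g` of `I` agree;
applying `φ` and cancelling the units `s`, `t` of the fraction ring gives the identity. -/
lemma map_mul_swap {O : Type*} [CommRing O] (I : Submodule O (FractionRing O))
    (φ : I →ₗ[O] O) (g h : I) :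
    algebraMap O (FractionRing O) (φ h) * (g : FractionRing O) =
      algebraMap O (FractionRing O) (φ g) * (h : FractionRing O) := by
  obtain ⟨⟨a, s⟩, ha⟩ := IsLocalization.surj (nonZeroDivisors O) (g : FractionRing O)
  obtain ⟨⟨b, t⟩, hb⟩ := IsLocalization.surj (nonZeroDivisors O) (h : FractionRing O)
  dsimp only at ha hb
  have key : (a * (t : O)) • h = (b * (s : O)) • g := by
    apply Subtype.ext
    simp only [Submodule.coe_smul, Algebra.smul_def, map_mul]
    rw [← ha, ← hb]
    ring
  have hφ := congrArg (fun y => algebraMap O (FractionRing O) (φ y)) key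
  simp only [map_smul, smul_eq_mul, map_mul] at hφ
  rw [← ha, ← hb] at hφ
  have hs := IsLocalization.map_units (FractionRing O) s
  have ht := IsLocalization.map_units (FractionRing O) t
  apply (hs.mul ht).mul_left_cancel
  linear_combination hφ

/-- Let `O` be a commutative ring, `K` its total ring of fractions, and
`I` an `O`-submodule of `K` containing an element `g` that is a unit of `K`. Then
`Φ : Hom_O(I,O) → K`, `Φ(φ) = φ(g)·g⁻¹`, is an injective `O`-module homomorphism whose
image is exactly `I* = {x ∈ K : x·I ⊆ O}`; hence `Hom_O(I,O) ≅ I*` as `O`-modules. -/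
theorem stmt_3 {O : Type*} [CommRing O]
    (I : Submodule O (FractionRing O)) (g : FractionRing O) (hg : g ∈ I) (hgu : IsUnit g) :
    Function.Injective
      (fun φ : I →ₗ[O] O =>
        algebraMap O (FractionRing O) (φ ⟨g, hg⟩) * Ring.inverse g) ∧
    (∀ φ ψ : I →ₗ[O] O,
        algebraMap O (FractionRing O) ((φ + ψ) ⟨g, hg⟩) * Ring.inverse g =
          algebraMap O (FractionRing O) (φ ⟨g, hg⟩) * Ring.inverse g +
            algebraMap O (FractionRing O) (ψ ⟨g, hg⟩) * Ring.inverse g) ∧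
    (∀ (c : O) (φ : I →ₗ[O] O),
        algebraMap O (FractionRing O) ((c • φ) ⟨g, hg⟩) * Ring.inverse g =
          c • (algebraMap O (FractionRing O) (φ ⟨g, hg⟩) * Ring.inverse g)) ∧
    Set.range
      (fun φ : I →ₗ[O] O =>
        algebraMap O (FractionRing O) (φ ⟨g, hg⟩) * Ring.inverse g) =
      {x : FractionRing O | ∀ h ∈ I, x * h ∈ Set.range (algebraMap O (FractionRing O))} := by
  have hinj : Function.Injective (algebraMap O (FractionRing O)) :=
    IsFractionRing.injective O (FractionRing O)
  have hmul : ∀ (φ : I →ₗ[O] O) (h : I), algebraMap O (FractionRing O) (φ h) =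
      algebraMap O (FractionRing O) (φ ⟨g, hg⟩) * Ring.inverse g * h := by
    intro φ h
    apply hgu.mul_right_cancel
    have h1 := map_mul_swap I φ ⟨g, hg⟩ h
    have h2 := Ring.inverse_mul_cancel g hgu
    dsimp only at h1
    linear_combination h1 -
      algebraMap O (FractionRing O) (φ ⟨g, hg⟩) * (h : FractionRing O) * h2
  refine ⟨?_, ?_, ?_, ?_⟩
  · intro φ ψ heq
    dsimp only at heq
    ext h
    apply hinj
    rw [hmul φ h, hmul ψ h, heq]
  · intro φ ψ
    rw [LinearMap.add_apply, map_add, add_mul]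
  · intro c φ
    rw [LinearMap.smul_apply, smul_eq_mul, map_mul, Algebra.smul_def, mul_assoc]
  · ext x
    constructor
    · rintro ⟨φ, rfl⟩ h hh
      exact ⟨φ ⟨h, hh⟩, hmul φ ⟨h, hh⟩⟩
    · intro hx
      choose f hf using hx
      -- Injectivity of `O → K` makes the chosen preimages `f h` of `x * h` linear in `h`.
      refine ⟨{ toFun := fun h => f h h.2, map_add' := ?_, map_smul' := ?_ }, ?_⟩
      · intro h k
        apply hinj
        rw [map_add, hf, hf, hf, Submodule.coe_add, mul_add]
      · intro c h
        apply hinj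
        rw [RingHom.id_apply, smul_eq_mul, map_mul, hf, hf, Submodule.coe_smul,
          Algebra.smul_def, mul_left_comm]
      · change algebraMap O (FractionRing O) (f g hg) * Ring.inverse g = x
        rw [hf, mul_assoc, Ring.mul_inverse_cancel g hgu, mul_one]
end

section
/- Let S ⊆ ℕ^r be closed under addition, suppose c + ℕ^r ⊆ S for some c ∈ ℕ^r, and let α ∈ S with α_i ≥ 1 for all i. Define the Apéry set A_α = {β ∈ S : β − α ∉ S}. Then for every β ∈ ℤ^r: β ∉ S if and only if β = a − ρα for some a ∈ A_α and some integer ρ ≥ 1. -/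
/-!
If `β ∉ S`, the conductor `c` forces `β + nα ∈ S` for large `n`, because every `α i ≥ 1`. For the
least such `n` the point `β + nα` lies in the Apéry set, and `n ≥ 1`. Conversely, if
`β = a - ρα` with `ρ ≥ 1` were in `S`, then so would be `a - α = β + (ρ - 1)α`.
-/

/-- The fiber `F_J(E,α)` of `α` with respect to a subset `J` of indices. -/
def FJ {ι : Type*} (E : Set (ι → ℤ)) (J : Set ι) (α : ι → ℤ) : Set (ι → ℤ) :=
  {β ∈ E | (∀ j ∈ J, β j = α j) ∧ ∀ j ∉ J, α j < β j}

/-- The fiber `F(E,α) = ⋃ᵢ F_{{i}}(E,α)` of `α`. -/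
def Fib {ι : Type*} (E : Set (ι → ℤ)) (α : ι → ℤ) : Set (ι → ℤ) :=
  ⋃ i : ι, FJ E {i} α

/-- The closed fiber `F̄_i(E,α)`. -/
def FibBar {ι : Type*} (E : Set (ι → ℤ)) (i : ι) (α : ι → ℤ) : Set (ι → ℤ) :=
  {β ∈ E | β i = α i ∧ ∀ j ≠ i, α j ≤ β j}

/-- The Apéry set `A_α(E) = {β ∈ E : β - α ∉ E}`. -/
def Apery {ι : Type*} (E : Set (ι → ℤ)) (α : ι → ℤ) : Set (ι → ℤ) :=
  {β ∈ E | β - α ∉ E}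

theorem add_nsmul_mem_of_add_closed {M : Type*} [AddCommMonoid M] {S : Set M}
    (hSadd : ∀ a ∈ S, ∀ b ∈ S, a + b ∈ S) {α β : M} (hα : α ∈ S) (hβ : β ∈ S) (n : ℕ) :
    β + n • α ∈ S := by
  induction n with
  | zero => simpa using hβ
  | succ k ih =>
    rw [succ_nsmul, ← add_assoc]
    exact hSadd _ ih _ hα

/-- Any vector with entries at least `1` has a multiple carrying `β` above `c`. -/
theorem exists_le_add_nsmul {ι : Type*} [Fintype ι] (c α β : ι → ℤ) (hα : ∀ i, 1 ≤ α i) :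
    ∃ n : ℕ, c ≤ β + n • α := by
  refine ⟨∑ i, (c i - β i).toNat, fun i => ?_⟩
  have h : (c i - β i).toNat ≤ ∑ i, (c i - β i).toNat :=
    Finset.single_le_sum (f := fun i => (c i - β i).toNat) (fun _ _ => Nat.zero_le _)
      (Finset.mem_univ i)
  generalize (∑ i, (c i - β i).toNat) = n at h
  have h2 : (n : ℤ) * 1 ≤ n * α i := mul_le_mul_of_nonneg_left (hα i) (Int.natCast_nonneg n)
  have h3 : c i ≤ β i + n * α i := by omega
  simpa using h3

/-- Let `S ⊆ ℕ^r` be closed under addition with `c + ℕ^r ⊆ S`, and let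
`α ∈ S` with `α_i ≥ 1` for all `i`. With `A_α = {β ∈ S : β − α ∉ S}`, for every
`β ∈ ℤ^r`: `β ∉ S` iff `β = a − ρα` for some `a ∈ A_α` and some integer `ρ ≥ 1`. -/
theorem stmt_7 {r : ℕ} (S : Set (Fin r → ℤ))
    (hS0 : ∀ β ∈ S, ∀ i, 0 ≤ β i)
    (hSadd : ∀ a ∈ S, ∀ b ∈ S, a + b ∈ S)
    (c : Fin r → ℤ) (hc0 : ∀ i, 0 ≤ c i) (hc : ∀ β : Fin r → ℤ, c ≤ β → β ∈ S)
    (α : Fin r → ℤ) (hαS : α ∈ S) (hα1 : ∀ i, 1 ≤ α i) :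
    ∀ β : Fin r → ℤ,
      β ∉ S ↔ ∃ a ∈ Apery S α, ∃ ρ : ℕ, 1 ≤ ρ ∧ β = a - (ρ : ℤ) • α := by
  classical
  intro β
  constructor
  · intro hβ
    have hex : ∃ n : ℕ, β + n • α ∈ S :=
      (exists_le_add_nsmul c α β hα1).imp fun n hn => hc _ hn
    have hpos : 1 ≤ Nat.find hex := by
      rw [Nat.one_le_iff_ne_zero]
      intro h0
      have := Nat.find_spec hex
      rw [h0] at this
      exact hβ (by simpa using this)
    refine ⟨β + Nat.find hex • α, ⟨Nat.find_spec hex, ?_⟩, Nat.find hex, hpos, ?_⟩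
    · intro hmem
      refine Nat.find_min hex (m := Nat.find hex - 1) (by omega) ?_
      convert hmem using 1
      obtain ⟨k, hk⟩ := Nat.exists_eq_add_of_le' hpos
      rw [hk, Nat.add_sub_cancel, succ_nsmul]
      abel
    · rw [natCast_zsmul, add_sub_cancel_right]
  · rintro ⟨a, ⟨-, ha⟩, ρ, hρ, rfl⟩ hβ
    obtain ⟨k, rfl⟩ := Nat.exists_eq_add_of_le' hρ
    apply ha
    convert add_nsmul_mem_of_add_closed hSadd hαS hβ k using 1
    rw [natCast_zsmul, succ_nsmul]
    abel
end

section
/- Let S ⊆ ℕ^r be closed under addition, let c ∈ ℕ^r with c + ℕ^r ⊆ S, set f = c − (1,…,1), and assume F(S, f) = ∅. Let α ∈ S with α_i ≥ 1 for all i, and let A_α = {β ∈ S : β − α ∉ S} be its Apéry set. Then the following are equivalent: (a) S is symmetric, i.e., for every γ ∈ ℕ^r one has γ ∈ S if and only if F(S, f − γ) = ∅; (b) for every a ∈ ℕ^r, if a ∈ A_α then F(S, f + α − a) ≠ ∅ and F(S, f + α − a) ⊆ A_α. -/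
theorem mem_Fib {ι : Type*} {E : Set (ι → ℤ)} {α β : ι → ℤ} :
    β ∈ Fib E α ↔ β ∈ E ∧ ∃ i, β i = α i ∧ ∀ j, j ≠ i → α j < β j := by
  simp only [Fib, FJ, Set.mem_iUnion, Set.mem_ofPred_eq, Set.mem_singleton_iff, forall_eq,
    exists_and_left, ne_eq]

theorem Fib_add {ι : Type*} {E : Set (ι → ℤ)} {δ β : ι → ℤ} (h : β ∈ Fib E δ) (γ : ι → ℤ)
    (hγ : β + γ ∈ E) : β + γ ∈ Fib E (δ + γ) := by
  obtain ⟨-, i, hi, hj⟩ := mem_Fib.1 h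
  refine mem_Fib.2 ⟨hγ, i, by simp [hi], fun j hji => ?_⟩
  have := hj j hji
  simpa using this

/-- The fiber of `δ` is nonempty as soon as one coordinate of `δ` reaches the conductor: the
other coordinates of the witness may be taken large. -/
theorem Fib_nonempty_of_le {ι : Type*} {E : Set (ι → ℤ)} {c : ι → ℤ}
    (hc : ∀ β : ι → ℤ, c ≤ β → β ∈ E) {δ : ι → ℤ} {i : ι} (hi : c i ≤ δ i) :
    (Fib E δ).Nonempty := by
  classical
  refine ⟨fun j => if j = i then δ j else max (c j) (δ j + 1), mem_Fib.2 ⟨hc _ fun j => ?_, i, ?_⟩⟩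
  · by_cases h : j = i
    · subst h; simpa using hi
    · simp [h]
  · refine ⟨by simp, fun j hj => ?_⟩
    have := le_max_right (c j) (δ j + 1)
    simp only [hj, if_false]
    lia

theorem add_nsmul_mem {M : Type*} [AddMonoid M] {S : Set M}
    (hSadd : ∀ a ∈ S, ∀ b ∈ S, a + b ∈ S) {α β : M} (hα : α ∈ S) (hβ : β ∈ S) (n : ℕ) :
    β + n • α ∈ S := by
  induction n with
  | zero => simpa using hβ
  | succ n ih =>
    rw [succ_nsmul, ← add_assoc]
    exact hSadd _ ih _ hα

/-- Since `α` is positive in each of the finitely many coordinates, its multiples eventually push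
any non-negative `γ` past the conductor. -/
theorem exists_add_nsmul_mem {r : ℕ} {S : Set (Fin r → ℤ)} {c : Fin r → ℤ}
    (hc0 : ∀ i, 0 ≤ c i) (hc : ∀ β : Fin r → ℤ, c ≤ β → β ∈ S)
    {α : Fin r → ℤ} (hα1 : ∀ i, 1 ≤ α i) {γ : Fin r → ℤ} (hγ : ∀ i, 0 ≤ γ i) :
    ∃ k : ℕ, γ + k • α ∈ S := by
  refine ⟨∑ i, (c i).toNat, hc _ fun i => ?_⟩
  have h1 : (c i).toNat ≤ ∑ i, (c i).toNat :=
    Finset.single_le_sum (f := fun i => (c i).toNat) (fun _ _ => Nat.zero_le _) (Finset.mem_univ i)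
  have h2 : c i ≤ ((∑ i, (c i).toNat : ℕ) : ℤ) := by
    have := Int.self_le_toNat (c i)
    lia
  have h3 := hγ i
  have h4 := hα1 i
  have h5 := hc0 i
  rw [Pi.add_apply, Pi.smul_apply, nsmul_eq_mul]
  nlinarith

/-- Let `S ⊆ ℕ^r` be closed under addition, `c + ℕ^r ⊆ S`,
`f = c − (1,…,1)`, and assume `F(S,f) = ∅`. Let `α ∈ S` with `α_i ≥ 1` and Apéry set
`A_α`. Then `S` is symmetric iff for every `a ∈ ℕ^r` with `a ∈ A_α` one has
`F(S, f + α − a) ≠ ∅` and `F(S, f + α − a) ⊆ A_α`. -/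
theorem stmt_8 {r : ℕ} (S : Set (Fin r → ℤ))
    (hS0 : ∀ β ∈ S, ∀ i, 0 ≤ β i)
    (hSadd : ∀ a ∈ S, ∀ b ∈ S, a + b ∈ S)
    (c : Fin r → ℤ) (hc0 : ∀ i, 0 ≤ c i) (hc : ∀ β : Fin r → ℤ, c ≤ β → β ∈ S)
    (f : Fin r → ℤ) (hf : f = c - 1) (hFf : Fib S f = ∅)
    (α : Fin r → ℤ) (hαS : α ∈ S) (hα1 : ∀ i, 1 ≤ α i) :
    (∀ γ : Fin r → ℤ, (∀ i, 0 ≤ γ i) → (γ ∈ S ↔ Fib S (f - γ) = ∅)) ↔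
      (∀ a : Fin r → ℤ, (∀ i, 0 ≤ a i) → a ∈ Apery S α →
        (Fib S (f + α - a)).Nonempty ∧ Fib S (f + α - a) ⊆ Apery S α) := by
  classical
  have key : ∀ γ ∈ S, Fib S (f - γ) = ∅ := by
    intro γ hγ
    refine Set.eq_empty_of_forall_notMem fun β hβ => ?_
    have h := Fib_add hβ γ (hSadd _ (mem_Fib.1 hβ).1 _ hγ)
    rw [sub_add_cancel, hFf] at h
    exact h
  constructor
  · rintro hsym a - ⟨haS, haα⟩
    constructor
    · by_cases h : ∀ i, 0 ≤ (a - α) i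
      · rw [Set.nonempty_iff_ne_empty]
        intro he
        refine haα ((hsym _ h).2 ?_)
        rwa [sub_sub_eq_add_sub]
      · push Not at h
        obtain ⟨i, hi⟩ := h
        refine Fib_nonempty_of_le hc (i := i) ?_
        simp only [hf, Pi.add_apply, Pi.sub_apply, Pi.one_apply] at hi ⊢
        lia
    · refine fun β hβ => ⟨(mem_Fib.1 hβ).1, fun hβα => ?_⟩
      have e : β + (a - α) = (β - α) + a := by abel
      have h := Fib_add hβ (a - α) (by rw [e]; exact hSadd _ hβα _ haS)
      rw [show f + α - a + (a - α) = f by abel, hFf] at h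
      exact h
  · intro hb γ hγ
    refine ⟨key γ, fun he => ?_⟩
    by_contra hγS
    have hex := exists_add_nsmul_mem hc0 hc hα1 hγ
    obtain ⟨n, hn⟩ : ∃ n, Nat.find hex = n + 1 := by
      refine Nat.exists_eq_succ_of_ne_zero fun h0 => hγS ?_
      simpa [h0] using Nat.find_spec hex
    have hmem : γ + (n + 1) • α ∈ S := hn ▸ Nat.find_spec hex
    have hnot : γ + n • α ∉ S := Nat.find_min hex (by lia)
    have e : γ + (n + 1) • α - α = γ + n • α := by rw [succ_nsmul]; abel
    obtain ⟨⟨β, hβ⟩, -⟩ := hb _ (hS0 _ hmem) ⟨hmem, by rwa [e]⟩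
    have h := Fib_add hβ (n • α) (add_nsmul_mem hSadd hαS (mem_Fib.1 hβ).1 n)
    rw [show f + α - (γ + (n + 1) • α) + n • α = f - γ by rw [succ_nsmul]; abel, he] at h
    exact h
end

section
/- Let f ∈ ℤ^r and let E, E* ⊆ ℤ^r be subsets satisfying the duality relations: for every β ∈ ℤ^r, β ∈ E* if and only if F(E, f − β) = ∅, and for every β ∈ ℤ^r, β ∈ E if and only if F(E*, f − β) = ∅. Let α ∈ E ∩ E*. Then for every a ∈ ℤ^r with a ∈ A_α(E), one has F(E*, f + α − a) ≠ ∅ and F(E*, f + α − a) ⊆ A_α(E*). -/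
/-- Let `f ∈ ℤ^r` and `E, E* ⊆ ℤ^r` satisfy the duality relations
`β ∈ E* ↔ F(E, f−β) = ∅` and `β ∈ E ↔ F(E*, f−β) = ∅`. Let `α ∈ E ∩ E*`. Then for
every `a ∈ A_α(E)` one has `F(E*, f+α−a) ≠ ∅` and `F(E*, f+α−a) ⊆ A_α(E*)`. -/
theorem stmt_9 {r : ℕ} (f : Fin r → ℤ) (E Estar : Set (Fin r → ℤ))
    (hdual₁ : ∀ β : Fin r → ℤ, β ∈ Estar ↔ Fib E (f - β) = ∅)
    (hdual₂ : ∀ β : Fin r → ℤ, β ∈ E ↔ Fib Estar (f - β) = ∅)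
    (α : Fin r → ℤ) (hα : α ∈ E ∩ Estar) :
    ∀ a : Fin r → ℤ, a ∈ Apery E α →
      (Fib Estar (f + α - a)).Nonempty ∧ Fib Estar (f + α - a) ⊆ Apery Estar α := by
  rintro a ⟨haE, haα⟩
  -- The base point is `f - (a - α)`, so nonemptiness is the duality relation at `a - α ∉ E`.
  rw [show f + α - a = f - (a - α) by abel]
  refine ⟨Set.nonempty_iff_ne_empty.mpr fun h => haα ((hdual₂ _).mpr h), fun b hb => ?_⟩
  obtain ⟨i, hbE, hbi, hbj⟩ := Set.mem_iUnion.mp hb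
  refine ⟨hbE, fun hbα => ?_⟩
  -- If `b - α ∈ E*`, translating by `-α` puts it in `F(E*, f - a)`, which is empty as `a ∈ E`.
  have hmem : b - α ∈ Fib Estar (f - a) := by
    refine Set.mem_iUnion.mpr ⟨i, hbα, fun j hj => ?_, fun j hj => ?_⟩
    · have := hbi j hj
      simp only [Pi.sub_apply] at this ⊢
      omega
    · have := hbj j hj
      simp only [Pi.sub_apply] at this ⊢
      omega
  rw [(hdual₂ a).mp haE] at hmem
  exact hmem
end

section
/- Let r ≥ 2 and let E ⊆ ℤ^r have a minimum element α⁰ ∈ E (i.e., α⁰ ≤ β componentwise for all β ∈ E). Let α ∈ ℤ^r with α_r = α⁰_r, and let i ∈ {1,…,r−1}. Then F̄_i(E, α) ≠ ∅ if and only if F̄_i(pr_{I′}(E), pr_{I′}(α)) ≠ ∅, where I′ = {1,…,r−1} and pr_{I′} : ℤ^r → ℤ^{r−1} is the projection onto the first r−1 coordinates (the fiber F̄_i in ℤ^{r−1} being defined analogously). -/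
/-- Let `r ≥ 2` and let `E ⊆ ℤ^r` have a minimum element `α⁰ ∈ E`.
Let `α ∈ ℤ^r` with `α_r = α⁰_r` and `i ∈ {1,…,r−1}`. Then `F̄_i(E,α) ≠ ∅` iff
`F̄_i(pr_{I'}(E), pr_{I'}(α)) ≠ ∅`, where `I' = {1,…,r−1}`. -/
theorem stmt_12 {r : ℕ} (hr : 2 ≤ r) (E : Set (Fin r → ℤ))
    (α0 : Fin r → ℤ) (hα0E : α0 ∈ E) (hα0min : ∀ β ∈ E, α0 ≤ β)
    (α : Fin r → ℤ)
    (hlast : α ⟨r - 1, by omega⟩ = α0 ⟨r - 1, by omega⟩)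
    (i : Fin (r - 1)) :
    (FibBar E (Fin.castLE (Nat.sub_le r 1) i) α).Nonempty ↔
      (FibBar
          ((fun β : Fin r → ℤ => fun j : Fin (r - 1) => β (Fin.castLE (Nat.sub_le r 1) j)) '' E)
          i (fun j : Fin (r - 1) => α (Fin.castLE (Nat.sub_le r 1) j))).Nonempty := by
  constructor
  · rintro ⟨β, hβE, hβi, hβ⟩
    exact ⟨_, ⟨β, hβE, rfl⟩, hβi, fun j hj =>
      hβ _ fun h => hj (Fin.castLE_injective (Nat.sub_le r 1) h)⟩
  · rintro ⟨_, ⟨β, hβE, rfl⟩, hβi, hβ⟩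
    refine ⟨β, hβE, hβi, fun j hj => ?_⟩
    by_cases hjr : j.val < r - 1
    · exact hβ ⟨j.val, hjr⟩ fun h => hj (by rw [← h]; rfl)
    · -- On the last coordinate the bound comes from minimality of `α0`, as `α` agrees with it there.
      have hj_last : j = ⟨r - 1, by omega⟩ := Fin.ext (by have := j.isLt; simp only; omega)
      rw [hj_last, hlast]
      exact hα0min β hβE _
end
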